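/- (Sudakov–Fernique inequality) Let (X_t)_{t∈T} and (Y_t)_{t∈T} be mean-zero Gaussian processes on a finite index set T satisfying E[(X_t − X_s)²] ≤ E[(Y_t − Y_s)²] for all t, s ∈ T. Then E[sup_{t∈T} X_t] ≤ E[sup_{t∈T} Y_t]. -/

import Mathlib

open MeasureTheory ProbabilityTheory
open scoped NNReal

/-- A family of real random variables is a mean-zero (jointly) Gaussian process if every
finite linear combination has a centered Gaussian distribution. -/
def IsCenteredGaussianProcess {Ω : Type*} [MeasurableSpace Ω] (P : Measure Ω)
    {T : Type*} [Fintype T] (X : T → Ω → ℝ) : Prop :=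
  ∀ c : T → ℝ, ∃ v : ℝ≥0, P.map (fun ω => ∑ t, c t * X t ω) = gaussianReal 0 v

theorem hasDerivAt_gaussianPDFReal (v : ℝ≥0) (x : ℝ) :
    HasDerivAt (gaussianPDFReal 0 v) (-(x / v) * gaussianPDFReal 0 v x) x := by
  rw [gaussianPDFReal_def]
  have h : HasDerivAt (fun y : ℝ => -(y - 0) ^ 2 / (2 * v)) (-(x / v)) x := by
    refine (((((hasDerivAt_id x).sub_const 0).pow 2).neg).div_const (2 * (v : ℝ))).congr_deriv ?_
    by_cases hv : (v : ℝ) = 0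
    · simp [hv]
    · simp; field_simp
  refine (h.exp.const_mul _).congr_deriv ?_
  ring

/-- Gaussian integration by parts on the real line. -/
theorem integral_mul_gaussianReal {v : ℝ≥0} (hv : v ≠ 0) {h h' : ℝ → ℝ} {C C' : ℝ}
    (hd : ∀ x, HasDerivAt h (h' x) x) (hb : ∀ x, |h x| ≤ C) (hm' : Measurable h')
    (hb' : ∀ x, |h' x| ≤ C') :
    ∫ x, x * h x ∂(gaussianReal 0 v) = v * ∫ x, h' x ∂(gaussianReal 0 v) := by
  have hc : Continuous h := continuous_iff_continuousAt.2 fun x => (hd x).continuousAt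
  have hv' : (v : ℝ) ≠ 0 := by exact_mod_cast hv
  rw [integral_gaussianReal_eq_integral_smul hv, integral_gaussianReal_eq_integral_smul hv]
  have hi : Integrable (fun x => gaussianPDFReal 0 v x * x) := by
    have := integrable_withDensity_iff_integrable_smul₀' (μ := volume) (f := gaussianPDF 0 v)
      (g := fun x : ℝ => x) (measurable_gaussianPDF 0 v).aemeasurable
      (ae_of_all _ fun _ => gaussianPDF_lt_top)
    rw [← gaussianReal_of_var_ne_zero 0 hv] at this
    simpa [toReal_gaussianPDF] using this.1 IsGaussian.integrable_fun_id
  have hp := integrable_gaussianPDFReal 0 v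
  have key := integral_mul_deriv_eq_deriv_mul_of_integrable (u := h) (u' := h')
    (v := gaussianPDFReal 0 v) (v' := fun x => -(x / v) * gaussianPDFReal 0 v x)
    (fun x _ => hd x) (fun x _ => hasDerivAt_gaussianPDFReal v x) ?_ ?_ ?_
  · simp only [smul_eq_mul]
    have e1 : ∀ x, gaussianPDFReal 0 v x * (x * h x)
        = -v * (h x * (-(x / v) * gaussianPDFReal 0 v x)) := fun x => by field_simp
    simp_rw [e1, integral_const_mul, key, mul_comm (gaussianPDFReal 0 v _)]
    ring
  · have : Integrable (fun x => h x * (gaussianPDFReal 0 v x * x)) :=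
      hi.bdd_mul hc.aestronglyMeasurable (ae_of_all _ hb)
    refine (this.const_mul (-(v : ℝ)⁻¹)).congr (ae_of_all _ fun x => ?_)
    simp; ring
  · exact hp.bdd_mul hm'.aestronglyMeasurable (ae_of_all _ hb')
  · exact hp.bdd_mul hc.aestronglyMeasurable (ae_of_all _ hb)

theorem covariance_eq_integral_mul {E : Type*} [NormedAddCommGroup E] [NormedSpace ℝ E]
    [MeasurableSpace E] {γ : Measure E} [IsGaussian γ]
    (hγ : ∀ L : StrongDual ℝ E, ∫ x, L x ∂γ = 0) (L M : StrongDual ℝ E) :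
    cov[L, M; γ] = ∫ x, L x * M x ∂γ := by
  simp [covariance, hγ]

theorem map_eq_gaussianReal_of_centered {E : Type*} [NormedAddCommGroup E] [NormedSpace ℝ E]
    [MeasurableSpace E] [BorelSpace E] {γ : Measure E} [IsGaussian γ]
    (hγ : ∀ L : StrongDual ℝ E, ∫ x, L x ∂γ = 0) (L : StrongDual ℝ E) :
    γ.map L = gaussianReal 0 (∫ x, L x * L x ∂γ).toNNReal := by
  rw [IsGaussian.map_eq_gaussianReal, hγ, ← covariance_eq_integral_mul hγ,
    covariance_self L.continuous.aemeasurable]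

theorem integrable_strongDual_smul {E : Type*} [NormedAddCommGroup E] [NormedSpace ℝ E]
    [MeasurableSpace E] [BorelSpace E] [CompleteSpace E] [SecondCountableTopology E]
    (γ : Measure E) [IsGaussian γ]
    (L : StrongDual ℝ E) : Integrable (fun x => L x • x) γ :=
  memLp_one_iff_integrable.1
    (IsGaussian.memLp_two_fun_id.smul (IsGaussian.memLp_dual γ L 2 (by simp)))

theorem integral_mul_eq_dual_integral_smul {E : Type*} [NormedAddCommGroup E] [NormedSpace ℝ E]
    [MeasurableSpace E] [BorelSpace E] [CompleteSpace E] [SecondCountableTopology E]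
    (γ : Measure E) [IsGaussian γ]
    (L M : StrongDual ℝ E) : ∫ x, L x * M x ∂γ = M (∫ x, L x • x ∂γ) := by
  rw [← M.integral_comp_comm (integrable_strongDual_smul γ L)]
  simp

/-- Gaussian integration by parts for a centered Gaussian measure. -/
theorem integral_strongDual_mul_eq {E : Type*} [NormedAddCommGroup E] [NormedSpace ℝ E]
    [MeasurableSpace E] [BorelSpace E] [CompleteSpace E] [SecondCountableTopology E]
    {γ : Measure E} [IsGaussian γ]
    (hγ : ∀ L : StrongDual ℝ E, ∫ x, L x ∂γ = 0) (L : StrongDual ℝ E)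
    {g g' : E → ℝ} {C C' : ℝ} (hd : ∀ x, HasLineDerivAt ℝ g (g' x) x (∫ y, L y • y ∂γ))
    (hm : Measurable g) (hb : ∀ x, |g x| ≤ C) (hm' : Measurable g') (hb' : ∀ x, |g' x| ≤ C') :
    ∫ x, L x * g x ∂γ = ∫ x, g' x ∂γ := by
  have hk := integral_mul_eq_dual_integral_smul γ L
  set k := ∫ y, L y • y ∂γ
  have hlaw := map_eq_gaussianReal_of_centered hγ L
  rw [hk] at hlaw
  have hLk : 0 ≤ L k := by
    rw [← hk]; exact integral_nonneg fun x => mul_self_nonneg _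
  rcases hLk.eq_or_lt with h0 | hpos
  · have hLae : ∀ᵐ x ∂γ, L x = 0 := by
      have h1 : ∀ᵐ y ∂(γ.map L), y = 0 := by
        rw [hlaw, ← h0]; simp [ae_dirac_eq]
      exact ae_of_ae_map L.continuous.aemeasurable h1
    have hk0 : k = 0 := by
      refine SeparatingDual.eq_zero_of_forall_dual_eq_zero (R := ℝ) fun M => ?_
      rw [← hk M]
      refine integral_eq_zero_of_ae ?_
      filter_upwards [hLae] with x hx using by simp [hx]
    have hg0 : ∀ x, g' x = 0 := fun x => by
      have := hd x
      rw [hk0, HasLineDerivAt] at this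
      simp only [smul_zero, add_zero] at this
      exact this.unique (hasDerivAt_const _ _)
    simp only [hg0, integral_zero]
    refine integral_eq_zero_of_ae ?_
    filter_upwards [hLae] with x hx using by simp [hx]
  · set v := (L k).toNNReal with hv
    have hvk : (v : ℝ) = L k := Real.coe_toNNReal _ hLk
    have hv0 : v ≠ 0 := by simpa [hv] using hpos
    let R : E →L[ℝ] E := ContinuousLinearMap.id ℝ E - (L k)⁻¹ • L.smulRight k
    have hR : ∀ x, R x = x - (L k)⁻¹ • L x • k := fun x => by simp [R]
    have hind : IndepFun L R γ := by
      have hg : HasGaussianLaw (fun x => (L x, R x)) γ :=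
        IsGaussian.hasGaussianLaw_id.map_fun (L.prod R)
      refine hg.indepFun_of_covariance_strongDual fun L₁ L₂ => ?_
      have := covariance_eq_integral_mul hγ (L₁ ∘L L) (L₂ ∘L R)
      refine Eq.trans this ?_
      have e : ∀ x, (L₁ ∘L L) x * (L₂ ∘L R) x = L₁ 1 * (L x * (L₂ ∘L R) x) := fun x => by
        have : L₁ (L x) = L x * L₁ 1 := by
          rw [← smul_eq_mul, ← map_smul]; simp
        simp only [ContinuousLinearMap.comp_apply, this]; ring
      simp_rw [e, integral_const_mul, hk]
      simp [hR, hpos.ne']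
    have hmap := (indepFun_iff_map_prod_eq_prod_map_map L.continuous.aemeasurable
      R.continuous.aemeasurable).1 hind
    rw [hlaw] at hmap
    have hLR : Measurable (fun x => (L x, R x)) := by fun_prop
    have hrec : ∀ x, R x + (L x / L k) • k = x := fun x => by
      rw [hR, smul_smul, div_eq_inv_mul, sub_add_cancel]
    have : IsProbabilityMeasure (γ.map R) :=
      Measure.isProbabilityMeasure_map R.continuous.aemeasurable
    have hsum : Measurable (fun p : ℝ × E => p.2 + (p.1 / L k) • k) := by fun_prop
    have e1 : ∫ x, L x * g x ∂γ
        = ∫ p, p.1 * g (p.2 + (p.1 / L k) • k) ∂((gaussianReal 0 v).prod (γ.map R)) := by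
      rw [← hmap, integral_map hLR.aemeasurable]
      · simp only [hrec]
      · exact (measurable_fst.mul (hm.comp hsum)).aestronglyMeasurable
    have e2 : ∫ x, g' x ∂γ
        = ∫ p, g' (p.2 + (p.1 / L k) • k) ∂((gaussianReal 0 v).prod (γ.map R)) := by
      rw [← hmap, integral_map hLR.aemeasurable]
      · simp only [hrec]
      · exact (hm'.comp hsum).aestronglyMeasurable
    rw [e1, e2, integral_prod_symm, integral_prod_symm]
    · congr 1 with r
      have hder : ∀ s : ℝ, HasDerivAt (fun s : ℝ => g (r + (s / L k) • k))
          (g' (r + (s / L k) • k) / L k) s := fun s => by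
        have h1 := hd (r + (s / L k) • k)
        rw [HasLineDerivAt] at h1
        have h2 : HasDerivAt (fun y : ℝ => (y - s) / L k) (1 / L k) s :=
          ((hasDerivAt_id s).sub_const s).div_const _
        have h3 := HasDerivAt.comp (h₂ := fun t : ℝ => g (r + (s / L k) • k + t • k)) s
          (by simpa using h1) h2
        refine (h3.congr_deriv (by ring)).congr_of_eventuallyEq (Filter.Eventually.of_forall ?_)
        intro y
        simp only [Function.comp]
        rw [add_assoc, ← add_smul]
        congr 3
        ring
      have hbd : ∀ s : ℝ, |g' (r + (s / L k) • k) / L k| ≤ C' / L k := fun s => by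
        rw [abs_div, abs_of_pos hpos]
        have := hb' (r + (s / L k) • k)
        gcongr
      have := integral_mul_gaussianReal hv0 hder (fun s => hb _)
        ((hm'.comp (by fun_prop : Measurable fun s : ℝ => r + (s / L k) • k)).div_const _) hbd
      rw [this, integral_div, hvk]
      field_simp
    · exact Integrable.of_bound (hm'.comp hsum).aestronglyMeasurable C' (ae_of_all _ fun _ => hb' _)
    · refine Integrable.mul_bdd (c := C) ?_ (hm.comp hsum).aestronglyMeasurable
        (ae_of_all _ fun _ => hb _)
      exact IsGaussian.integrable_fun_id.comp_fst _

/-- The smooth approximation `β⁻¹ log ∑ᵢ exp (β zᵢ)` of the maximum. -/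
noncomputable def logSumExp {T : Type*} [Fintype T] (β : ℝ) (z : T → ℝ) : ℝ :=
  β⁻¹ * Real.log (∑ i, Real.exp (β * z i))

/-- The Gibbs weights, which are the partial derivatives of `logSumExp`. -/
noncomputable def gibbsWeight {T : Type*} [Fintype T] (β : ℝ) (i : T) (z : T → ℝ) : ℝ :=
  Real.exp (β * z i) / ∑ j, Real.exp (β * z j)

theorem sum_exp_pos {T : Type*} [Fintype T] [Nonempty T] (β : ℝ) (z : T → ℝ) :
    0 < ∑ i, Real.exp (β * z i) :=
  Finset.sum_pos (fun _ _ => Real.exp_pos _) Finset.univ_nonempty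

theorem gibbsWeight_nonneg {T : Type*} [Fintype T] (β : ℝ) (i : T) (z : T → ℝ) :
    0 ≤ gibbsWeight β i z :=
  div_nonneg (Real.exp_pos _).le (Finset.sum_nonneg fun _ _ => (Real.exp_pos _).le)

theorem sum_gibbsWeight {T : Type*} [Fintype T] [Nonempty T] (β : ℝ) (z : T → ℝ) :
    ∑ i, gibbsWeight β i z = 1 := by
  simp only [gibbsWeight, ← Finset.sum_div]
  exact div_self (sum_exp_pos β z).ne'

theorem gibbsWeight_le_one {T : Type*} [Fintype T] [Nonempty T] (β : ℝ) (i : T) (z : T → ℝ) :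
    gibbsWeight β i z ≤ 1 := by
  rw [← sum_gibbsWeight β z]
  exact Finset.single_le_sum (fun j _ => gibbsWeight_nonneg β j z) (Finset.mem_univ i)

theorem measurable_gibbsWeight {T : Type*} [Fintype T] (β : ℝ) (i : T) :
    Measurable (gibbsWeight (T := T) β i) := by
  unfold gibbsWeight; fun_prop

theorem measurable_logSumExp {T : Type*} [Fintype T] (β : ℝ) :
    Measurable (logSumExp (T := T) β) := by
  unfold logSumExp; fun_prop

theorem hasDerivAt_sum_exp {T : Type*} [Fintype T] (β : ℝ) {z : ℝ → T → ℝ}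
    {z' : T → ℝ} {s : ℝ} (hz : ∀ i, HasDerivAt (fun s => z s i) (z' i) s) :
    HasDerivAt (fun s => ∑ i, Real.exp (β * z s i))
      (∑ i, Real.exp (β * z s i) * (β * z' i)) s :=
  HasDerivAt.fun_sum fun i _ => ((hz i).const_mul β).exp

theorem hasDerivAt_logSumExp {T : Type*} [Fintype T] [Nonempty T] {β : ℝ} (hβ : β ≠ 0)
    {z : ℝ → T → ℝ} {z' : T → ℝ} {s : ℝ} (hz : ∀ i, HasDerivAt (fun s => z s i) (z' i) s) :
    HasDerivAt (fun s => logSumExp β (z s)) (∑ i, gibbsWeight β i (z s) * z' i) s := by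
  refine (((hasDerivAt_sum_exp β hz).log (sum_exp_pos β _).ne').const_mul β⁻¹).congr_deriv ?_
  rw [Finset.sum_div, Finset.mul_sum]
  refine Finset.sum_congr rfl fun i _ => ?_
  have := (sum_exp_pos β (z s)).ne'
  rw [gibbsWeight]
  field_simp

theorem hasDerivAt_gibbsWeight {T : Type*} [Fintype T] [Nonempty T] (β : ℝ) (i : T)
    {z : ℝ → T → ℝ} {z' : T → ℝ} {s : ℝ} (hz : ∀ i, HasDerivAt (fun s => z s i) (z' i) s) :
    HasDerivAt (fun s => gibbsWeight β i (z s))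
      (β * gibbsWeight β i (z s) * (z' i - ∑ j, gibbsWeight β j (z s) * z' j)) s := by
  have h0 := (sum_exp_pos β (z s)).ne'
  refine ((((hz i).const_mul β).exp).div (hasDerivAt_sum_exp β hz) h0).congr_deriv ?_
  have e : ∑ j, Real.exp (β * z s j) * (β * z' j)
      = β * (∑ j, gibbsWeight β j (z s) * z' j) * ∑ j, Real.exp (β * z s j) := by
    rw [mul_assoc, Finset.sum_mul, Finset.mul_sum]
    refine Finset.sum_congr rfl fun j _ => ?_
    rw [gibbsWeight]
    field_simp
  rw [e, gibbsWeight]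
  field_simp

theorem iSup_le_logSumExp {T : Type*} [Fintype T] [Nonempty T] {β : ℝ} (hβ : 0 < β)
    (z : T → ℝ) : ⨆ i, z i ≤ logSumExp β z := by
  refine ciSup_le fun i => ?_
  rw [logSumExp, inv_mul_eq_div, le_div_iff₀ hβ, Real.le_log_iff_exp_le (sum_exp_pos β z),
    mul_comm]
  exact Finset.single_le_sum (f := fun i => Real.exp (β * z i)) (fun _ _ => (Real.exp_pos _).le)
    (Finset.mem_univ i)

theorem logSumExp_le {T : Type*} [Fintype T] [Nonempty T] {β : ℝ} (hβ : 0 < β)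
    (z : T → ℝ) : logSumExp β z ≤ (⨆ i, z i) + Real.log (Fintype.card T) / β := by
  have hc : (0 : ℝ) < Fintype.card T := by exact_mod_cast Fintype.card_pos
  have h : ∑ i, Real.exp (β * z i) ≤ Fintype.card T * Real.exp (β * ⨆ i, z i) := by
    rw [← nsmul_eq_mul]
    refine Finset.sum_le_card_nsmul _ _ _ fun i _ => ?_
    have := le_ciSup (Set.finite_range z).bddAbove i
    gcongr
  have := Real.log_le_log (sum_exp_pos β z) h
  rw [Real.log_mul hc.ne' (Real.exp_pos _).ne', Real.log_exp] at this
  rw [logSumExp, inv_mul_eq_div, div_le_iff₀ hβ]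
  field_simp
  linarith

theorem abs_iSup_le_sum_abs {T : Type*} [Fintype T] [Nonempty T] (z : T → ℝ) :
    |⨆ i, z i| ≤ ∑ i, |z i| := by
  have hs : ∀ i, |z i| ≤ ∑ i, |z i| := fun i =>
    Finset.single_le_sum (f := fun i => |z i|) (fun _ _ => abs_nonneg _) (Finset.mem_univ i)
  obtain ⟨i, hi⟩ := exists_eq_ciSup_of_finite (f := z)
  rw [← hi]
  exact hs i

theorem abs_logSumExp_le {T : Type*} [Fintype T] [Nonempty T] {β : ℝ} (hβ : 0 < β)
    (z : T → ℝ) : |logSumExp β z| ≤ ∑ i, |z i| + Real.log (Fintype.card T) / β := by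
  have h1 := abs_le.1 (abs_iSup_le_sum_abs z)
  have h2 := iSup_le_logSumExp hβ z
  have h3 := logSumExp_le hβ z
  have h4 : 0 ≤ Real.log (Fintype.card T) / β :=
    div_nonneg (Real.log_natCast_nonneg _) hβ.le
  exact abs_le.2 ⟨by linarith [h1.1], by linarith [h1.2]⟩

/-- A matrix with nonnegative increments has nonnegative average against the Hessian of
`logSumExp`. -/
theorem sum_mul_sub_sum_mul_nonneg {T : Type*} [Fintype T] {p : T → ℝ} (hp : ∀ i, 0 ≤ p i)
    (hp1 : ∑ i, p i = 1) {c : T → T → ℝ} (hc : ∀ i j, 0 ≤ c i i + c j j - 2 * c i j) :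
    0 ≤ ∑ i, p i * (c i i - ∑ j, p j * c i j) := by
  have h : 0 ≤ ∑ i, ∑ j, p i * p j * (c i i + c j j - 2 * c i j) :=
    Finset.sum_nonneg fun i _ => Finset.sum_nonneg fun j _ =>
      mul_nonneg (mul_nonneg (hp i) (hp j)) (hc i j)
  have e1 : ∑ i, ∑ j, p i * p j * c i i = ∑ i, p i * c i i := by
    refine Finset.sum_congr rfl fun i _ => ?_
    rw [← Finset.sum_mul, ← Finset.mul_sum, hp1, mul_one]
  have e2 : ∑ i, ∑ j, p i * p j * c j j = ∑ i, p i * c i i := by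
    rw [Finset.sum_comm, ← e1]
    exact Finset.sum_congr rfl fun i _ => Finset.sum_congr rfl fun j _ => by ring
  have e3 : ∑ i, p i * ∑ j, p j * c i j = ∑ i, ∑ j, p i * p j * c i j := by
    simp only [Finset.mul_sum, mul_assoc]
  have e4 : ∑ i, ∑ j, p i * p j * (c i i + c j j - 2 * c i j)
      = 2 * (∑ i, p i * c i i - ∑ i, ∑ j, p i * p j * c i j) := by
    simp only [mul_sub, mul_add, Finset.sum_sub_distrib, Finset.sum_add_distrib, e1, e2]
    simp only [mul_left_comm _ (2 : ℝ), ← Finset.mul_sum]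
    ring
  simp only [mul_sub, Finset.sum_sub_distrib, e3]
  linarith

theorem integral_strongDual_prod_eq_zero {E F : Type*} [NormedAddCommGroup E] [NormedSpace ℝ E]
    [MeasurableSpace E] [BorelSpace E] [CompleteSpace E] [SecondCountableTopology E]
    [NormedAddCommGroup F] [NormedSpace ℝ F] [MeasurableSpace F] [BorelSpace F] [CompleteSpace F]
    [SecondCountableTopology F] {μ : Measure E} {ν : Measure F} [IsGaussian μ] [IsGaussian ν]
    (hμ : ∀ L : StrongDual ℝ E, ∫ x, L x ∂μ = 0) (hν : ∀ L : StrongDual ℝ F, ∫ x, L x ∂ν = 0)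
    (L : StrongDual ℝ (E × F)) : ∫ p, L p ∂(μ.prod ν) = 0 := by
  have e : ∀ p : E × F, L p = (L ∘L .inl ℝ E F) p.1 + (L ∘L .inr ℝ E F) p.2 := fun p => by
    simp [← map_add]
  simp_rw [e]
  rw [integral_add ((IsGaussian.integrable_dual μ _).comp_fst ν)
      ((IsGaussian.integrable_dual ν _).comp_snd μ),
    integral_fun_fst (fun x => (L ∘L .inl ℝ E F) x), integral_fun_snd (fun x => (L ∘L .inr ℝ E F) x),
    hμ, hν]
  simp

theorem integrable_eval_mul_eval {T : Type*} [Fintype T] (μ : Measure (T → ℝ)) [IsGaussian μ]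
    (i j : T) : Integrable (fun x => x i * x j) μ :=
  (IsGaussian.memLp_dual μ (.proj i) 2 (by simp)).integrable_mul
    (IsGaussian.memLp_dual μ (.proj j) 2 (by simp))

theorem integrable_eval {T : Type*} [Fintype T] (μ : Measure (T → ℝ)) [IsGaussian μ]
    (i : T) : Integrable (fun x => x i) μ :=
  IsGaussian.integrable_dual μ (.proj i)

theorem integral_eval_sub_sq {T : Type*} [Fintype T] (μ : Measure (T → ℝ)) [IsGaussian μ]
    (i j : T) : ∫ x, (x i - x j) ^ 2 ∂μ
      = ∫ x, x i * x i ∂μ + ∫ x, x j * x j ∂μ - 2 * ∫ x, x i * x j ∂μ := by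
  rw [← integral_const_mul, ← integral_add (integrable_eval_mul_eval μ i i)
    (integrable_eval_mul_eval μ j j), ← integral_sub ((integrable_eval_mul_eval μ i i).fun_add
    (integrable_eval_mul_eval μ j j)) ((integrable_eval_mul_eval μ i j).const_mul 2)]
  congr 1 with x
  ring

/-- The interpolation `cos θ x + sin θ y` between two vectors. -/
noncomputable def rotate (T : Type*) [Fintype T] (θ : ℝ) : (T → ℝ) × (T → ℝ) →L[ℝ] (T → ℝ) :=
  Real.cos θ • .fst ℝ (T → ℝ) (T → ℝ) + Real.sin θ • .snd ℝ (T → ℝ) (T → ℝ)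

/-- The coordinate `i` of the derivative in `θ` of `rotate T θ`. -/
noncomputable def rotateDeriv {T : Type*} [Fintype T] (θ : ℝ) (i : T) :
    (T → ℝ) × (T → ℝ) →L[ℝ] ℝ :=
  (.proj i : (T → ℝ) →L[ℝ] ℝ) ∘L
    (Real.cos θ • .snd ℝ (T → ℝ) (T → ℝ) - Real.sin θ • .fst ℝ (T → ℝ) (T → ℝ) :
      (T → ℝ) × (T → ℝ) →L[ℝ] (T → ℝ))

theorem rotate_apply {T : Type*} [Fintype T] (θ : ℝ) (p : (T → ℝ) × (T → ℝ)) (i : T) :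
    rotate T θ p i = Real.cos θ * p.1 i + Real.sin θ * p.2 i := by
  simp [rotate]

theorem rotateDeriv_apply {T : Type*} [Fintype T] (θ : ℝ) (p : (T → ℝ) × (T → ℝ)) (i : T) :
    rotateDeriv θ i p = Real.cos θ * p.2 i - Real.sin θ * p.1 i := by
  simp [rotateDeriv]

theorem hasDerivAt_rotate {T : Type*} [Fintype T] (p : (T → ℝ) × (T → ℝ)) (i : T) (θ : ℝ) :
    HasDerivAt (fun θ => rotate T θ p i) (rotateDeriv θ i p) θ := by
  simp only [rotate_apply, rotateDeriv_apply]
  refine (((Real.hasDerivAt_cos θ).mul_const _).add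
    ((Real.hasDerivAt_sin θ).mul_const _)).congr_deriv ?_
  ring

theorem integral_rotateDeriv_mul_rotate {T : Type*} [Fintype T] {μ ν : Measure (T → ℝ)}
    [IsGaussian μ] [IsGaussian ν] (hμ : ∀ L : StrongDual ℝ (T → ℝ), ∫ x, L x ∂μ = 0) (θ : ℝ)
    (i j : T) :
    ∫ p, rotateDeriv θ i p * rotate T θ p j ∂(μ.prod ν)
      = Real.sin θ * Real.cos θ * (∫ x, x i * x j ∂ν - ∫ x, x i * x j ∂μ) := by
  have hμ' : ∀ i, ∫ x : T → ℝ, x i ∂μ = 0 := fun i => hμ (.proj i)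
  have e : ∀ p : (T → ℝ) × (T → ℝ), rotateDeriv θ i p * rotate T θ p j
      = Real.cos θ ^ 2 * (p.1 j * p.2 i) + Real.sin θ * Real.cos θ * (p.2 i * p.2 j)
        - (Real.sin θ * Real.cos θ * (p.1 i * p.1 j) + Real.sin θ ^ 2 * (p.1 i * p.2 j)) :=
    fun p => by rw [rotate_apply, rotateDeriv_apply]; ring
  have h1 : Integrable (fun p => p.1 i * p.1 j) (μ.prod ν) :=
    (integrable_eval_mul_eval μ i j).comp_fst ν
  have h2 : Integrable (fun p => p.2 i * p.2 j) (μ.prod ν) :=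
    (integrable_eval_mul_eval ν i j).comp_snd μ
  have h3 : ∀ i j, Integrable (fun p => p.1 i * p.2 j) (μ.prod ν) := fun i j =>
    (integrable_eval μ i).mul_prod (integrable_eval ν j)
  have h4 : ∀ i j, ∫ p, p.1 i * p.2 j ∂(μ.prod ν) = 0 := fun i j => by
    rw [integral_prod_mul (fun x : T → ℝ => x i) (fun y : T → ℝ => y j), hμ', zero_mul]
  simp_rw [e]
  rw [integral_sub (((h3 j i).const_mul _).fun_add (h2.const_mul _))
      ((h1.const_mul _).fun_add ((h3 i j).const_mul _)),
    integral_add ((h3 j i).const_mul _) (h2.const_mul _),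
    integral_add (h1.const_mul _) ((h3 i j).const_mul _)]
  simp only [integral_const_mul, h4]
  rw [integral_fun_fst (fun x : T → ℝ => x i * x j), integral_fun_snd (fun x : T → ℝ => x i * x j)]
  simp
  ring

theorem integral_rotateDeriv_mul_gibbsWeight {T : Type*} [Fintype T] [Nonempty T]
    {μ ν : Measure (T → ℝ)} [IsGaussian μ] [IsGaussian ν]
    (hμ : ∀ L : StrongDual ℝ (T → ℝ), ∫ x, L x ∂μ = 0)
    (hν : ∀ L : StrongDual ℝ (T → ℝ), ∫ x, L x ∂ν = 0) (β θ : ℝ) (i : T) {c : T → T → ℝ}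
    (hc : ∀ i j, ∫ p, rotateDeriv θ i p * rotate T θ p j ∂(μ.prod ν) = c i j) :
    ∫ p, rotateDeriv θ i p * gibbsWeight β i (rotate T θ p) ∂(μ.prod ν)
      = ∫ p, β * gibbsWeight β i (rotate T θ p)
          * (c i i - ∑ j, gibbsWeight β j (rotate T θ p) * c i j) ∂(μ.prod ν) := by
  have hw : ∀ j, Measurable fun p => gibbsWeight β j (rotate T θ p) := fun j =>
    (measurable_gibbsWeight β j).comp (rotate T θ).continuous.measurable
  have hw1 : ∀ j p, |gibbsWeight β j (rotate T θ p)| ≤ 1 := fun j p => by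
    rw [abs_of_nonneg (gibbsWeight_nonneg _ _ _)]
    exact gibbsWeight_le_one _ _ _
  refine integral_strongDual_mul_eq (integral_strongDual_prod_eq_zero hμ hν) (rotateDeriv θ i)
    (C := 1) (C' := |β| * 1 * (|c i i| + ∑ j, 1 * |c i j|)) (fun p => ?_) (hw i) (hw1 i) ?_ ?_
  · have hk : ∀ j, rotate T θ (∫ p, rotateDeriv θ i p • p ∂(μ.prod ν)) j = c i j := fun j => by
      rw [← hc]
      exact (integral_mul_eq_dual_integral_smul (μ.prod ν) (rotateDeriv θ i)
        (.proj j ∘L rotate T θ)).symm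
    have := hasDerivAt_gibbsWeight β i (s := 0) (z' := c i)
      (z := fun t => rotate T θ (p + t • ∫ p, rotateDeriv θ i p • p ∂(μ.prod ν))) fun j => by
        simp only [map_add, map_smul, Pi.add_apply, Pi.smul_apply, hk, smul_eq_mul]
        simpa using ((hasDerivAt_id (0 : ℝ)).mul_const (c i j)).const_add (rotate T θ p j)
    simpa [HasLineDerivAt] using this
  · have := hw i
    fun_prop
  · intro p
    rw [abs_mul, abs_mul]
    refine mul_le_mul (mul_le_mul_of_nonneg_left (hw1 i p) (abs_nonneg _)) ?_ (abs_nonneg _)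
      (by positivity)
    refine (abs_sub _ _).trans (add_le_add_right ((Finset.abs_sum_le_sum_abs _ _).trans ?_) _)
    refine Finset.sum_le_sum fun j _ => ?_
    rw [abs_mul]
    exact mul_le_mul_of_nonneg_right (hw1 j p) (abs_nonneg _)

theorem integrable_logSumExp {T : Type*} [Fintype T] [Nonempty T] {μ : Measure (T → ℝ)}
    [IsGaussian μ] {β : ℝ} (hβ : 0 < β) : Integrable (logSumExp (T := T) β) μ := by
  refine Integrable.mono' (g := fun z => ∑ i, |z i| + Real.log (Fintype.card T) / β)
    ((integrable_finsetSum _ fun i _ => (integrable_eval μ i).abs).add (integrable_const _))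
    (measurable_logSumExp β).aestronglyMeasurable (ae_of_all _ fun z => abs_logSumExp_le hβ z)

theorem integral_logSumExp_le {T : Type*} [Fintype T] [Nonempty T]
    {μ ν : Measure (T → ℝ)} [IsGaussian μ] [IsGaussian ν]
    (hμ : ∀ L : StrongDual ℝ (T → ℝ), ∫ x, L x ∂μ = 0)
    (hν : ∀ L : StrongDual ℝ (T → ℝ), ∫ x, L x ∂ν = 0)
    (hincr : ∀ s t, ∫ x, (x t - x s) ^ 2 ∂μ ≤ ∫ x, (x t - x s) ^ 2 ∂ν) {β : ℝ} (hβ : 0 < β) :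
    ∫ x, logSumExp β x ∂μ ≤ ∫ x, logSumExp β x ∂ν := by
  set γ := μ.prod ν
  have hint : ∀ θ, Integrable (fun p => logSumExp β (rotate T θ p)) γ := fun θ =>
    (integrable_logSumExp (μ := γ.map (rotate T θ)) hβ).comp_measurable
      (rotate T θ).continuous.measurable
  have hmw : ∀ θ i, Measurable fun p => gibbsWeight β i (rotate T θ p) := fun θ i =>
    (measurable_gibbsWeight β i).comp (rotate T θ).continuous.measurable
  have hder : ∀ θ, HasDerivAt (fun θ => ∫ p, logSumExp β (rotate T θ p) ∂γ)
      (∫ p, ∑ i, gibbsWeight β i (rotate T θ p) * rotateDeriv θ i p ∂γ) θ := fun θ => by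
    refine (hasDerivAt_integral_of_dominated_loc_of_deriv_le (s := Set.univ)
      (bound := fun p => ∑ i, (|p.2 i| + |p.1 i|))
      (F' := fun θ p => ∑ i, gibbsWeight β i (rotate T θ p) * rotateDeriv θ i p)
      Filter.univ_mem (.of_forall fun θ => (hint θ).aestronglyMeasurable) (hint θ) ?_ ?_ ?_ ?_).2
    · exact (Finset.measurable_sum _ fun i _ =>
        (hmw θ i).mul (rotateDeriv θ i).continuous.measurable).aestronglyMeasurable
    · refine ae_of_all _ fun p θ _ => (Finset.abs_sum_le_sum_abs _ _).trans
        (Finset.sum_le_sum fun i _ => ?_)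
      rw [abs_mul, abs_of_nonneg (gibbsWeight_nonneg _ _ _), rotateDeriv_apply]
      refine (mul_le_of_le_one_left (abs_nonneg _) (gibbsWeight_le_one _ _ _)).trans
        ((abs_sub _ _).trans ?_)
      rw [abs_mul, abs_mul]
      exact add_le_add (mul_le_of_le_one_left (abs_nonneg _) (Real.abs_cos_le_one θ))
        (mul_le_of_le_one_left (abs_nonneg _) (Real.abs_sin_le_one θ))
    · exact integrable_finsetSum _ fun i _ => ((integrable_eval ν i).abs.comp_snd μ).add
        ((integrable_eval μ i).abs.comp_fst ν)
    · exact ae_of_all _ fun p θ _ =>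
        hasDerivAt_logSumExp hβ.ne' fun i => hasDerivAt_rotate p i θ
  have hnonneg : ∀ θ ∈ Set.Icc 0 (Real.pi / 2),
      0 ≤ ∫ p, ∑ i, gibbsWeight β i (rotate T θ p) * rotateDeriv θ i p ∂γ := fun θ hθ => by
    have hsc : 0 ≤ Real.sin θ * Real.cos θ :=
      mul_nonneg (Real.sin_nonneg_of_nonneg_of_le_pi hθ.1 (by linarith [hθ.2, Real.pi_pos]))
        (Real.cos_nonneg_of_mem_Icc ⟨by linarith [hθ.1, Real.pi_pos], hθ.2⟩)
    have hw1 : ∀ i p, ‖gibbsWeight β i (rotate T θ p)‖ ≤ 1 := fun i p => by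
      rw [Real.norm_of_nonneg (gibbsWeight_nonneg _ _ _)]
      exact gibbsWeight_le_one _ _ _
    simp_rw [mul_comm (gibbsWeight _ _ _)]
    rw [integral_finsetSum _ fun i _ => (IsGaussian.integrable_dual γ (rotateDeriv θ i)).mul_bdd
      (hmw θ i).aestronglyMeasurable (ae_of_all _ (hw1 i))]
    rw [Finset.sum_congr rfl fun i _ => integral_rotateDeriv_mul_gibbsWeight hμ hν β θ i
      (integral_rotateDeriv_mul_rotate hμ θ)]
    rw [← integral_finsetSum]
    · refine integral_nonneg fun p => ?_
      simp only [mul_assoc β, ← Finset.mul_sum]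
      refine mul_nonneg hβ.le (sum_mul_sub_sum_mul_nonneg (fun i => gibbsWeight_nonneg _ _ _)
        (sum_gibbsWeight _ _) (c := fun i j => Real.sin θ * Real.cos θ
          * (∫ x, x i * x j ∂ν - ∫ x, x i * x j ∂μ)) fun i j => ?_)
      have := hincr j i
      rw [integral_eval_sub_sq, integral_eval_sub_sq] at this
      have := mul_nonneg hsc (sub_nonneg.2 this)
      linarith
    · intro i _
      have hwi : ∀ j, Integrable (fun p => gibbsWeight β j (rotate T θ p)) γ := fun j =>
        Integrable.of_bound (hmw θ j).aestronglyMeasurable 1 (ae_of_all _ (hw1 j))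
      exact (((integrable_const _).sub (integrable_finsetSum _ fun j _ =>
        (hwi j).mul_const _)).bdd_mul ((hmw θ i).const_mul β).aestronglyMeasurable
        (ae_of_all _ fun p => (norm_mul_le _ _).trans
          (mul_le_mul_of_nonneg_left (hw1 i p) (norm_nonneg _))))
  have hmono : MonotoneOn (fun θ => ∫ p, logSumExp β (rotate T θ p) ∂γ)
      (Set.Icc 0 (Real.pi / 2)) := by
    refine monotoneOn_of_deriv_nonneg (convex_Icc _ _)
      (fun θ _ => (hder θ).continuousAt.continuousWithinAt)
      (fun θ _ => (hder θ).differentiableAt.differentiableWithinAt) fun θ hθ => ?_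
    rw [(hder θ).deriv]
    exact hnonneg θ (interior_subset hθ)
  have hpi : 0 ≤ Real.pi / 2 := by positivity
  have key := hmono (Set.left_mem_Icc.2 hpi) (Set.right_mem_Icc.2 hpi) hpi
  have e0 : ∀ p, rotate T 0 p = p.1 := fun p => by ext i; simp [rotate_apply]
  have e1 : ∀ p, rotate T (Real.pi / 2) p = p.2 := fun p => by ext i; simp [rotate_apply]
  simp only [e0, e1] at key
  rw [integral_fun_fst (logSumExp β), integral_fun_snd (logSumExp β)] at key
  simpa using key

theorem integrable_iSup_eval {T : Type*} [Fintype T] [Nonempty T] (μ : Measure (T → ℝ))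
    [IsGaussian μ] : Integrable (fun x => ⨆ t, x t) μ :=
  Integrable.mono' (integrable_finsetSum _ fun i _ => (integrable_eval μ i).abs)
    (Measurable.iSup fun t => measurable_pi_apply t).aestronglyMeasurable
    (ae_of_all _ abs_iSup_le_sum_abs)

theorem integral_iSup_eval_le {T : Type*} [Fintype T] [Nonempty T]
    {μ ν : Measure (T → ℝ)} [IsGaussian μ] [IsGaussian ν]
    (hμ : ∀ L : StrongDual ℝ (T → ℝ), ∫ x, L x ∂μ = 0)
    (hν : ∀ L : StrongDual ℝ (T → ℝ), ∫ x, L x ∂ν = 0)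
    (hincr : ∀ s t, ∫ x, (x t - x s) ^ 2 ∂μ ≤ ∫ x, (x t - x s) ^ 2 ∂ν) :
    ∫ x, (⨆ t, x t) ∂μ ≤ ∫ x, (⨆ t, x t) ∂ν := by
  have hβ : ∀ β : ℝ, 0 < β → ∫ x, (⨆ t, x t) ∂μ
      ≤ ∫ x, (⨆ t, x t) ∂ν + Real.log (Fintype.card T) / β := fun β hβ =>
    calc ∫ x, (⨆ t, x t) ∂μ ≤ ∫ x, logSumExp β x ∂μ :=
          integral_mono (integrable_iSup_eval μ) (integrable_logSumExp hβ)
            fun x => iSup_le_logSumExp hβ x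
      _ ≤ ∫ x, logSumExp β x ∂ν := integral_logSumExp_le hμ hν hincr hβ
      _ ≤ ∫ x, ((⨆ t, x t) + Real.log (Fintype.card T) / β) ∂ν :=
          integral_mono (integrable_logSumExp hβ)
            ((integrable_iSup_eval ν).add (integrable_const _)) fun x => logSumExp_le hβ x
      _ = _ := by rw [integral_add (integrable_iSup_eval ν) (integrable_const _)]; simp
  have hlim : Filter.Tendsto (fun β : ℝ => ∫ x, (⨆ t, x t) ∂ν + Real.log (Fintype.card T) / β)
      Filter.atTop (nhds (∫ x, (⨆ t, x t) ∂ν + 0)) :=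
    (Filter.tendsto_id.const_div_atTop _).const_add _
  rw [add_zero] at hlim
  exact ge_of_tendsto hlim ((Filter.eventually_gt_atTop 0).mono hβ)

theorem IsCenteredGaussianProcess.exists_map_strongDual_eq {Ω : Type*} [MeasurableSpace Ω]
    {P : Measure Ω} {T : Type*} [Fintype T] {X : T → Ω → ℝ} (hXm : ∀ t, Measurable (X t))
    (hX : IsCenteredGaussianProcess P X) (L : StrongDual ℝ (T → ℝ)) :
    ∃ v : ℝ≥0, (P.map fun ω t => X t ω).map L = gaussianReal 0 v := by
  classical
  obtain ⟨v, hv⟩ := hX fun t => L (Pi.single t 1)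
  refine ⟨v, ?_⟩
  rw [← hv, Measure.map_map L.continuous.measurable (measurable_pi_lambda _ hXm)]
  congr 1 with ω
  conv_lhs => rw [Function.comp, pi_eq_sum_univ' (fun t => X t ω)]
  simp [mul_comm]

theorem IsCenteredGaussianProcess.isGaussian_map {Ω : Type*} [MeasurableSpace Ω]
    {P : Measure Ω} {T : Type*} [Fintype T] {X : T → Ω → ℝ} (hXm : ∀ t, Measurable (X t))
    (hX : IsCenteredGaussianProcess P X) : IsGaussian (P.map fun ω t => X t ω) :=
  isGaussian_of_map_eq_gaussianReal fun L => ⟨0, hX.exists_map_strongDual_eq hXm L⟩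

theorem IsCenteredGaussianProcess.integral_strongDual_map {Ω : Type*} [MeasurableSpace Ω]
    {P : Measure Ω} {T : Type*} [Fintype T] {X : T → Ω → ℝ} (hXm : ∀ t, Measurable (X t))
    (hX : IsCenteredGaussianProcess P X) (L : StrongDual ℝ (T → ℝ)) :
    ∫ x, L x ∂(P.map fun ω t => X t ω) = 0 := by
  obtain ⟨v, hv⟩ := hX.exists_map_strongDual_eq hXm L
  have := integral_map (μ := P.map fun ω t => X t ω) L.continuous.aemeasurable
    (f := fun x : ℝ => x) measurable_id.aestronglyMeasurable
  rw [← this, hv, integral_id_gaussianReal]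

/-- The Sudakov–Fernique inequality for mean-zero Gaussian processes on a finite index set. -/
theorem sudakov_fernique {Ω : Type*} [MeasurableSpace Ω] (P : Measure Ω) [IsProbabilityMeasure P]
    {T : Type*} [Fintype T] [Nonempty T] (X Y : T → Ω → ℝ)
    (hXm : ∀ t, Measurable (X t)) (hYm : ∀ t, Measurable (Y t))
    (hXg : IsCenteredGaussianProcess P X) (hYg : IsCenteredGaussianProcess P Y)
    (hincr : ∀ s t, ∫ ω, (X t ω - X s ω) ^ 2 ∂P ≤ ∫ ω, (Y t ω - Y s ω) ^ 2 ∂P) :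
    ∫ ω, (⨆ t, X t ω) ∂P ≤ ∫ ω, (⨆ t, Y t ω) ∂P := by
  have hX := measurable_pi_lambda (fun ω t => X t ω) hXm
  have hY := measurable_pi_lambda (fun ω t => Y t ω) hYm
  have := hXg.isGaussian_map hXm
  have := hYg.isGaussian_map hYm
  have hsq : ∀ s t : T, Measurable fun x : T → ℝ => (x t - x s) ^ 2 := fun s t => by fun_prop
  have hsup : Measurable fun x : T → ℝ => ⨆ t, x t := Measurable.iSup fun t => measurable_pi_apply t
  have key := integral_iSup_eval_le (hXg.integral_strongDual_map hXm)
    (hYg.integral_strongDual_map hYm) fun s t => by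
      rw [integral_map hX.aemeasurable (hsq s t).aestronglyMeasurable,
        integral_map hY.aemeasurable (hsq s t).aestronglyMeasurable]
      exact hincr s t
  rwa [integral_map hX.aemeasurable hsup.aestronglyMeasurable,
    integral_map hY.aemeasurable hsup.aestronglyMeasurable] at key
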